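/- Let X and Y be anisotropic quasilinear quadrics of the same dimension over a field k of characteristic 2, both with first Witt index equal to 1, such that X is isotropic over k(Y) and Y is isotropic over k(X). Then X and Y are birational over k. -/

import Mathlib

open MvPolynomial QuadraticMap

/-- The homogeneous degree-2 polynomial representing a quadratic form on `Fin N → k`,
with diagonal coefficients `q(eᵢ)` and off-diagonal coefficients `polar q eᵢ eⱼ`. -/
noncomputable def polyRep {k : Type*} [Field k] {N : ℕ}
    (q : QuadraticForm k (Fin N → k)) : MvPolynomial (Fin N) k :=
  (∑ i : Fin N, C (q (Pi.single i 1)) * X i ^ 2) +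
    ∑ p ∈ Finset.univ.filter (fun p : Fin N × Fin N => p.1 < p.2),
      C (polar q (Pi.single p.1 1) (Pi.single p.2 1)) * X p.1 * X p.2

/-- The value at `w : Fin N → K` of the scalar extension to `K` of a quadratic
form `q` over `k`. -/
noncomputable def extVal {k : Type*} (K : Type*) [Field k] [Field K] [Algebra k K]
    {N : ℕ} (q : QuadraticForm k (Fin N → k)) (w : Fin N → K) : K :=
  aeval w (polyRep q)

/-- `K` together with the "generic point" `ξ` is the function field `k(X)` of the
projective quadric `X = {q = 0} ⊆ ℙⁿ` (in the affine chart where the last homogeneous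
coordinate is `1`): the kernel of evaluation at `ξ` is exactly the ideal generated by
the defining equation of `q` and `X_n - 1`, and `K` is the fraction field of the
subalgebra generated by the coordinates of `ξ`. -/
def IsQuadricFunctionField (k : Type*) {K : Type*} [Field k] [Field K] [Algebra k K]
    {n : ℕ} (q : QuadraticForm k (Fin (n + 1) → k)) (ξ : Fin (n + 1) → K) : Prop :=
  RingHom.ker ((aeval ξ : MvPolynomial (Fin (n + 1)) k →ₐ[k] K) :
      MvPolynomial (Fin (n + 1)) k →+* K) =
    Ideal.span {polyRep q, X (Fin.last n) - 1} ∧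
  IsFractionRing (Algebra.adjoin k (Set.range ξ)) K

/-- The total index of `q` over the extension field `K`: the maximal dimension of a
`K`-linear subspace on which the scalar extension of `q` vanishes identically. -/
noncomputable def totalIndexExt (k K : Type*) [Field k] [Field K] [Algebra k K]
    {N : ℕ} (q : QuadraticForm k (Fin N → k)) : ℕ :=
  sSup {d | ∃ W : Submodule K (Fin N → K),
    (∀ w ∈ W, extVal K q w = 0) ∧ Module.finrank K W = d}


namespace QZ

theorem extVal_eq {k : Type*} (K : Type*) [Field k] [Field K] [Algebra k K]
    {N : ℕ} (q : QuadraticForm k (Fin N → k)) (hq : ∀ x y, q (x + y) = q x + q y)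
    (w : Fin N → K) :
    extVal K q w = ∑ i, algebraMap k K (q (Pi.single i 1)) * w i ^ 2 := by
  have hp : ∀ x y, polar q x y = 0 := by
    intro x y
    simp [polar, hq]
  simp [extVal, polyRep, hp]

theorem q_eq {k : Type*} [Field k]
    {N : ℕ} (q : QuadraticForm k (Fin N → k)) (hq : ∀ x y, q (x + y) = q x + q y)
    (w : Fin N → k) :
    q w = ∑ i, q (Pi.single i 1) * w i ^ 2 := by
  let f : (Fin N → k) →+ k := ⟨⟨q, by simp⟩, hq⟩
  have h1 : w = ∑ i, w i • (Pi.single i 1 : Fin N → k) := by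
    ext j
    simp [Finset.sum_apply, Pi.single_apply]
  have h2 : f w = ∑ i, f (w i • (Pi.single i 1 : Fin N → k)) := by
    conv_lhs => rw [h1]
    exact map_sum f _ _
  change f w = _
  rw [h2]
  refine Finset.sum_congr rfl fun i _ => ?_
  change q _ = _
  rw [QuadraticMap.map_smul, smul_eq_mul]
  ring

/-- squared linear relation -/
theorem sq_rel {k E Ω ι : Type*} [Fintype ι] [Field k] [Field E] [Field Ω] [CharP Ω 2]
    [Algebra k E] [Algebra k Ω] [Algebra E Ω] [IsScalarTower k E Ω] (a : ι → k)
    (α : ι → Ω) (hα : ∀ i, α i ^ 2 = algebraMap k Ω (a i)) (w : ι → E) :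
    ∑ i, w i • α i = 0 ↔ ∑ i, algebraMap k E (a i) * w i ^ 2 = 0 := by
  have : ExpChar Ω 2 := ExpChar.prime Nat.prime_two
  have h : (∑ i, w i • α i) ^ 2 = algebraMap E Ω (∑ i, algebraMap k E (a i) * w i ^ 2) := by
    rw [sum_pow_char 2, map_sum]
    refine Finset.sum_congr rfl fun i _ => ?_
    rw [Algebra.smul_def, mul_pow, hα, map_mul, map_pow, ← IsScalarTower.algebraMap_apply]
    ring
  rw [← pow_eq_zero_iff (two_ne_zero), h, map_eq_zero]

theorem li_iff {k E Ω ι : Type*} [Fintype ι] [Field k] [Field E] [Field Ω] [CharP Ω 2]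
    [Algebra k E] [Algebra k Ω] [Algebra E Ω] [IsScalarTower k E Ω] (a : ι → k)
    (α : ι → Ω) (hα : ∀ i, α i ^ 2 = algebraMap k Ω (a i)) :
    LinearIndependent E α ↔
      ∀ w : ι → E, ∑ i, algebraMap k E (a i) * w i ^ 2 = 0 → w = 0 := by
  rw [Fintype.linearIndependent_iff]
  simp_rw [sq_rel a α hα, funext_iff]
  rfl

section L
variable {E K Ω : Type*} [Field E] [Field K] [Field Ω] [Algebra E K] [Algebra E Ω]
  [Algebra K Ω] [IsScalarTower E K Ω]

theorem adjoin_le_span (S : Set Ω) (hS : ∀ x ∈ S, IsAlgebraic K x) :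
    ((IntermediateField.adjoin K S).toSubalgebra.toSubmodule : Submodule K Ω) =
      Submodule.span K (IntermediateField.adjoin E S : Set Ω) := by
  rw [IntermediateField.adjoin_toSubalgebra_of_isAlgebraic hS]
  apply le_antisymm
  · rw [Algebra.adjoin_eq_span]
    apply Submodule.span_mono
    have : Submonoid.closure S ≤ (IntermediateField.adjoin E S).toSubalgebra.toSubmonoid :=
      Submonoid.closure_le.2 (IntermediateField.subset_adjoin E S)
    exact this
  · rw [Submodule.span_le]
    intro x hx
    have hx' : x ∈ (IntermediateField.adjoin K S).restrictScalars E := by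
      have : IntermediateField.adjoin E S ≤ (IntermediateField.adjoin K S).restrictScalars E :=
        IntermediateField.adjoin_le_iff.2 (IntermediateField.subset_adjoin K S)
      exact this hx
    rw [← IntermediateField.adjoin_toSubalgebra_of_isAlgebraic hS]
    exact hx'

theorem span_basis_eq (S : Set Ω) {ι : Type*} (b : Module.Basis ι E (IntermediateField.adjoin E S)) :
    Submodule.span K (Set.range fun i => (b i : Ω)) =
      Submodule.span K (IntermediateField.adjoin E S : Set Ω) := by
  apply le_antisymm
  · apply Submodule.span_mono
    rintro _ ⟨i, rfl⟩
    exact (b i).2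
  · rw [Submodule.span_le]
    intro x hx
    have h := b.mem_span ⟨x, hx⟩
    have h2 := Submodule.mem_map_of_mem (f := (IntermediateField.adjoin E S).val.toLinearMap) h
    rw [Submodule.map_span, ← Set.range_comp] at h2
    exact Submodule.span_subset_span E K _ h2

theorem finrank_adjoin_eq (S : Set Ω) (hS : ∀ x ∈ S, IsAlgebraic K x) {ι : Type*}
    (b : Module.Basis ι E (IntermediateField.adjoin E S)) :
    Module.finrank K (IntermediateField.adjoin K S) =
      (Set.range fun i => (b i : Ω)).finrank K := by
  rw [Set.finrank, span_basis_eq, ← adjoin_le_span (K := K) S hS]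
  rfl

theorem li_of_finrank (S : Set Ω) (hS : ∀ x ∈ S, IsAlgebraic K x)
    [FiniteDimensional E (IntermediateField.adjoin E S)]
    (hle : Module.finrank E (IntermediateField.adjoin E S) ≤
      Module.finrank K (IntermediateField.adjoin K S))
    {ι : Type*} (v : ι → Ω) (hv : ∀ i, v i ∈ IntermediateField.adjoin E S)
    (hli : LinearIndependent E v) : LinearIndependent K v := by
  let v' : ι → IntermediateField.adjoin E S := fun i => ⟨v i, hv i⟩
  have hv' : LinearIndependent E v' := by
    apply LinearIndependent.of_comp (IntermediateField.adjoin E S).val.toLinearMap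
    exact hli
  let b := Module.Basis.extend hv'.linearIndepOn_id
  have : Fintype (hv'.linearIndepOn_id.extend (Set.subset_univ _)) :=
    FiniteDimensional.fintypeBasisIndex b
  have hb : LinearIndependent K (fun i => (b i : Ω)) := by
    rw [linearIndependent_iff_card_le_finrank_span, ← finrank_adjoin_eq S hS,
      ← Module.finrank_eq_card_basis b]
    exact hle
  have hsub := hv'.linearIndepOn_id.subset_extend (Set.subset_univ _)
  let e : ι → hv'.linearIndepOn_id.extend (Set.subset_univ _) :=
    fun i => ⟨v' i, hsub ⟨i, rfl⟩⟩
  have he : Function.Injective e := by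
    intro i j hij
    exact hv'.injective (congrArg Subtype.val hij)
  have := hb.comp e he
  convert this using 1
  ext i
  simp [b, e, v']

theorem finrank_ge_of_li (S : Set Ω) (hS : ∀ x ∈ S, IsAlgebraic K x) {ι : Type*} [Fintype ι]
    (b : Module.Basis ι E (IntermediateField.adjoin E S))
    (hb : LinearIndependent K (fun i => (b i : Ω))) :
    Module.finrank E (IntermediateField.adjoin E S) ≤
      Module.finrank K (IntermediateField.adjoin K S) := by
  rw [linearIndependent_iff_card_le_finrank_span] at hb
  rwa [finrank_adjoin_eq S hS b, Module.finrank_eq_card_basis b]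

end L

open scoped IntermediateField.algebraAdjoinAdjoin in
/-- algebraic elements stay linearly independent over a purely transcendental extension -/
theorem li_transc {k F Ω τ ι : Type*} [Field k] [Field F] [Field Ω] [Algebra k F] [Algebra k Ω]
    [Algebra F Ω] [IsScalarTower k F Ω] (t : τ → F) (ht : AlgebraicIndependent k t)
    (A : IntermediateField k Ω) [Algebra.IsAlgebraic k A] (v : ι → A)
    (hv : LinearIndependent k v) : LinearIndependent (IntermediateField.adjoin k (Set.range t)) (fun i => (v i : Ω)) := by
  have : IsScalarTower (Algebra.adjoin k (Set.range t))
      (IntermediateField.adjoin k (Set.range t)) Ω := IsScalarTower.of_algebraMap_eq fun x => rfl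
  rw [← LinearIndependent.iff_fractionRing (R := Algebra.adjoin k (Set.range t)),
    linearIndependent_iff']
  intro s g hg
  have hsur : ∀ i, ∃ p : MvPolynomial τ k, aeval t p = (g i : F) := by
    intro i
    obtain ⟨x, hx⟩ := g i
    rw [Algebra.adjoin_range_eq_range_aeval] at hx
    exact hx
  choose p hp using hsur
  have htΩ : AlgebraicIndependent k (fun i => algebraMap F Ω (t i)) :=
    ht.map' (f := IsScalarTower.toAlgHom k F Ω) (algebraMap F Ω).injective
  have htA : AlgebraicIndependent A (fun i => algebraMap F Ω (t i)) := htΩ.extendScalars A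
  let Q : MvPolynomial τ A := ∑ i ∈ s, C (v i) * map (algebraMap k A) (p i)
  have hQ : aeval (fun i => algebraMap F Ω (t i)) Q = 0 := by
    rw [← hg, map_sum]
    refine Finset.sum_congr rfl fun i _ => ?_
    rw [map_mul, MvPolynomial.aeval_map_algebraMap]
    have h1 : aeval (fun i => algebraMap F Ω (t i)) (p i) = algebraMap F Ω (g i : F) := by
      rw [← hp i]
      exact MvPolynomial.aeval_algebraMap_apply Ω t (p i)
    rw [h1, Algebra.smul_def, mul_comm]
    simp only [aeval_C]
    congr 1
  have hQ0 : Q = 0 := (injective_iff_map_eq_zero _).1 htA Q hQ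
  rw [linearIndependent_iff'] at hv
  intro i hi
  have : p i = 0 := by
    ext m
    have h2 := congrArg (coeff m) hQ0
    simp only [Q, coeff_sum, coeff_C_mul, coeff_map, coeff_zero] at h2
    refine hv s (fun i => coeff m (p i)) ?_ i hi
    rw [← h2]
    refine Finset.sum_congr rfl fun i _ => ?_
    rw [Algebra.smul_def, mul_comm]
  apply Subtype.ext
  rw [← hp i, this]
  simp


theorem finrank_le_two {F K : Type*} [Field F] [Field K] [Algebra F K] (x : K) (c : F)
    (hx : x ^ 2 = algebraMap F K c) (htop : IntermediateField.adjoin F {x} = ⊤) :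
    FiniteDimensional F K ∧ Module.finrank F K ≤ 2 := by
  have hint : IsIntegral F x := by
    refine ⟨Polynomial.X ^ 2 - Polynomial.C c, Polynomial.monic_X_pow_sub_C c two_ne_zero, ?_⟩
    simp [hx]
  have h1 := IntermediateField.adjoin.finrank hint
  have h2 := IntermediateField.adjoin.finiteDimensional hint
  rw [htop] at h1 h2
  have h2' : FiniteDimensional F K := by
    have := h2
    exact Module.Finite.equiv (IntermediateField.topEquiv (F := F) (E := K)).toLinearEquiv
  refine ⟨h2', ?_⟩
  rw [IntermediateField.finrank_top'] at h1
  rw [h1]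
  have := Polynomial.natDegree_le_of_dvd (minpoly.dvd F x (p := Polynomial.X ^ 2 - Polynomial.C c)
    (by simp [hx])) (Polynomial.X_pow_sub_C_ne_zero two_pos c)
  rwa [Polynomial.natDegree_X_pow_sub_C] at this

theorem top_of_insert {k K τ : Type*} [Field k] [Field K] [Algebra k K] (t : τ → K) (x : K)
    (htop : IntermediateField.adjoin k (insert x (Set.range t)) = ⊤) :
    IntermediateField.adjoin (IntermediateField.adjoin k (Set.range t)) {x} = ⊤ := by
  set F := IntermediateField.adjoin k (Set.range t) with hF
  rw [eq_top_iff]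
  intro y _
  have hy : y ∈ IntermediateField.adjoin k (insert x (Set.range t)) := by rw [htop]; trivial
  have hle : IntermediateField.adjoin k (insert x (Set.range t)) ≤
      (IntermediateField.adjoin F {x}).restrictScalars k := by
    rw [IntermediateField.adjoin_le_iff]
    intro z hz
    rcases hz with rfl | hz
    · exact IntermediateField.mem_adjoin_simple_self F z
    · have hzF : z ∈ F := IntermediateField.subset_adjoin k _ hz
      exact (IntermediateField.adjoin F {x}).algebraMap_mem ⟨z, hzF⟩
  exact hle hy

theorem half {k K Ω τ : Type*} [Field k] [Field K] [Field Ω] [Algebra k K] [Algebra k Ω]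
    [Algebra K Ω] [IsScalarTower k K Ω] (t : τ → K) (ht : AlgebraicIndependent k t)
    (x : K) (hx : x ^ 2 ∈ IntermediateField.adjoin k (Set.range t))
    (htop : IntermediateField.adjoin k (insert x (Set.range t)) = ⊤)
    (S : Set Ω) [hfin : Finite S] (hS : ∀ s ∈ S, IsIntegral k s) :
    Module.finrank k (IntermediateField.adjoin k S) ≤
      2 * Module.finrank K (IntermediateField.adjoin K S) := by
  have hfd : FiniteDimensional k (IntermediateField.adjoin k S) :=
    IntermediateField.finiteDimensional_adjoin hS
  set F := IntermediateField.adjoin k (Set.range t) with hF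
  have hKS : FiniteDimensional K (IntermediateField.adjoin K S) :=
    IntermediateField.finiteDimensional_adjoin fun s hs => (hS s hs).tower_top
  have hFS : FiniteDimensional F (IntermediateField.adjoin F S) :=
    IntermediateField.finiteDimensional_adjoin fun s hs => (hS s hs).tower_top
  have h1 : Module.finrank k (IntermediateField.adjoin k S) ≤
      Module.finrank F (IntermediateField.adjoin F S) := by
    refine finrank_ge_of_li S (fun s hs => ((hS s hs).tower_top).isAlgebraic)
      (Module.finBasis k (IntermediateField.adjoin k S)) ?_
    exact li_transc t ht _ _ (Module.finBasis k (IntermediateField.adjoin k S)).linearIndependent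
  have htop' := top_of_insert t x htop
  obtain ⟨hfd2, hle2⟩ := finrank_le_two (F := F) x ⟨x ^ 2, hx⟩ rfl htop'
  have h3 : Module.finrank F K * Module.finrank K (IntermediateField.adjoin K S) =
      Module.finrank F (IntermediateField.adjoin K S) := Module.finrank_mul_finrank _ _ _
  have hfd3 : FiniteDimensional F (IntermediateField.adjoin K S) :=
    Module.Finite.trans K _
  have h4 : Module.finrank F (IntermediateField.adjoin F S) ≤
      Module.finrank F (IntermediateField.adjoin K S) := by
    have hle : IntermediateField.adjoin F S ≤
        (IntermediateField.adjoin K S).restrictScalars F := by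
      rw [IntermediateField.adjoin_le_iff]
      exact IntermediateField.subset_adjoin K S
    exact LinearMap.finrank_le_finrank_of_injective (f := (IntermediateField.inclusion hle).toLinearMap)
      (IntermediateField.inclusion hle).injective
  calc _ ≤ _ := h1
    _ ≤ _ := h4
    _ = _ := h3.symm
    _ ≤ _ := Nat.mul_le_mul_right _ hle2

theorem finrank_pow {K Ω : Type*} [Field K] [Field Ω] [CharP K 2] [Algebra K Ω] (S : Set Ω)
    [Finite S] (hS : ∀ s ∈ S, s ^ 2 ∈ (algebraMap K Ω).range) :
    ∃ m, Module.finrank K (IntermediateField.adjoin K S) = 2 ^ m := by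
  have : ExpChar K 2 := ExpChar.prime Nat.prime_two
  have hint : ∀ s ∈ S, IsIntegral K s := by
    intro s hs
    obtain ⟨c, hc⟩ := hS s hs
    refine ⟨Polynomial.X ^ 2 - Polynomial.C c, Polynomial.monic_X_pow_sub_C c two_ne_zero, ?_⟩
    simp [hc]
  have hfd : FiniteDimensional K (IntermediateField.adjoin K S) :=
    IntermediateField.finiteDimensional_adjoin hint
  have : IsPurelyInseparable K (IntermediateField.adjoin K S) := by
    rw [IntermediateField.isPurelyInseparable_adjoin_iff_pow_mem K Ω 2]
    intro s hs
    exact ⟨1, by simpa using hS s hs⟩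
  exact IsPurelyInseparable.finrank_eq_pow _ _ 2

theorem core {k K Ω τ ι κ : Type*} [Field k] [Field K] [Field Ω] [CharP k 2]
    [Algebra k K] [Algebra k Ω]
    [Algebra K Ω] [IsScalarTower k K Ω] (t : τ → K) (ht : AlgebraicIndependent k t)
    (x : K) (hx : x ^ 2 ∈ IntermediateField.adjoin k (Set.range t))
    (htop : IntermediateField.adjoin k (insert x (Set.range t)) = ⊤)
    [Finite ι] [Finite κ] (α : ι → Ω) (β : κ → Ω)
    (hα : ∀ i, α i ^ 2 ∈ (algebraMap k Ω).range) (hβ : ∀ i, β i ^ 2 ∈ (algebraMap k Ω).range)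
    (E : IntermediateField k K) (hαk : LinearIndependent k α) (hαE : ¬ LinearIndependent E α)
    (hβK : ¬ LinearIndependent K β) : ¬ LinearIndependent E β := by
  intro hβE
  set S : Set Ω := Set.range α ∪ Set.range β with hSdef
  have hfin : Finite S := (Set.finite_range α).union (Set.finite_range β)
  have hSk : ∀ s ∈ S, s ^ 2 ∈ (algebraMap k Ω).range := by
    rintro s (⟨i, rfl⟩ | ⟨i, rfl⟩)
    · exact hα i
    · exact hβ i
  have hSE : ∀ s ∈ S, s ^ 2 ∈ (algebraMap E Ω).range := by
    intro s hs
    obtain ⟨c, hc⟩ := hSk s hs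
    exact ⟨algebraMap k E c, by rw [← hc, ← IsScalarTower.algebraMap_apply]⟩
  have hint : ∀ s ∈ S, IsIntegral k s := by
    intro s hs
    obtain ⟨c, hc⟩ := hSk s hs
    refine ⟨Polynomial.X ^ 2 - Polynomial.C c, Polynomial.monic_X_pow_sub_C c two_ne_zero, ?_⟩
    simp [hc]
  have : CharP E 2 := charP_of_injective_algebraMap (algebraMap k E).injective 2
  obtain ⟨a, ha⟩ := finrank_pow (K := k) S hSk
  obtain ⟨b, hb⟩ := finrank_pow (K := E) S hSE
  have hfk : FiniteDimensional k (IntermediateField.adjoin k S) :=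
    IntermediateField.finiteDimensional_adjoin hint
  have hfE : FiniteDimensional E (IntermediateField.adjoin E S) :=
    IntermediateField.finiteDimensional_adjoin fun s hs => (hint s hs).tower_top
  have h1 : Module.finrank E (IntermediateField.adjoin E S) <
      Module.finrank k (IntermediateField.adjoin k S) := by
    by_contra hcon
    refine hαE (li_of_finrank S (fun s hs => (hint s hs).tower_top.isAlgebraic)
      (not_lt.1 hcon) α (fun i => IntermediateField.subset_adjoin k S (Or.inl ⟨i, rfl⟩)) hαk)
  have h2 : Module.finrank K (IntermediateField.adjoin K S) <
      Module.finrank E (IntermediateField.adjoin E S) := by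
    by_contra hcon
    refine hβK (li_of_finrank S (fun s hs => (hint s hs).tower_top.isAlgebraic)
      (not_lt.1 hcon) β (fun i => IntermediateField.subset_adjoin E S (Or.inr ⟨i, rfl⟩)) hβE)
  have h3 := half t ht x hx htop S hint
  rw [ha] at h1 h3
  rw [hb] at h1 h2
  have hba : b + 1 ≤ a := (Nat.pow_lt_pow_iff_right (by norm_num)).1 h1
  have : 2 ^ (b + 1) ≤ 2 ^ a := Nat.pow_le_pow_right (by norm_num) hba
  rw [pow_succ] at this
  omega


theorem ff_top {k K : Type*} [Field k] [Field K] [Algebra k K] {n : ℕ}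
    {q : QuadraticForm k (Fin (n + 1) → k)} {ξ : Fin (n + 1) → K}
    (h : IsQuadricFunctionField k q ξ) : IntermediateField.adjoin k (Set.range ξ) = ⊤ := by
  rw [eq_top_iff]
  intro y _
  have := h.2
  obtain ⟨a, b, -, hab⟩ := IsFractionRing.div_surjective (A := Algebra.adjoin k (Set.range ξ)) y
  rw [← hab]
  exact div_mem (IntermediateField.algebra_adjoin_le_adjoin k _ a.2)
    (IntermediateField.algebra_adjoin_le_adjoin k _ b.2)

theorem ff_last {k K : Type*} [Field k] [Field K] [Algebra k K] {n : ℕ}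
    {q : QuadraticForm k (Fin (n + 1) → k)} {ξ : Fin (n + 1) → K}
    (h : IsQuadricFunctionField k q ξ) : ξ (Fin.last n) = 1 := by
  have : (X (Fin.last n) - 1 : MvPolynomial (Fin (n + 1)) k) ∈
      RingHom.ker ((aeval ξ : MvPolynomial (Fin (n + 1)) k →ₐ[k] K) :
      MvPolynomial (Fin (n + 1)) k →+* K) := by
    rw [h.1]
    exact Ideal.subset_span (by simp)
  rw [RingHom.mem_ker] at this
  simpa [sub_eq_zero] using this

theorem ff_zero {k K : Type*} [Field k] [Field K] [Algebra k K] {n : ℕ}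
    {q : QuadraticForm k (Fin (n + 1) → k)} {ξ : Fin (n + 1) → K}
    (h : IsQuadricFunctionField k q ξ) : extVal K q ξ = 0 := by
  have : (polyRep q : MvPolynomial (Fin (n + 1)) k) ∈
      RingHom.ker ((aeval ξ : MvPolynomial (Fin (n + 1)) k →ₐ[k] K) :
      MvPolynomial (Fin (n + 1)) k →+* K) := by
    rw [h.1]
    exact Ideal.subset_span (by simp)
  rw [RingHom.mem_ker] at this
  exact this

theorem ff_ker_le {k K Ω : Type*} [Field k] [Field K] [Algebra k K] [Field Ω] [Algebra k Ω] {n : ℕ}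
    {q : QuadraticForm k (Fin (n + 1) → k)} {ξ : Fin (n + 1) → K}
    (h : IsQuadricFunctionField k q ξ) (y : Fin (n + 1) → Ω) (hy : extVal Ω q y = 0)
    (hy1 : y (Fin.last n) = 1) (p : MvPolynomial (Fin (n + 1)) k) (hp : aeval ξ p = 0) :
    aeval y p = 0 := by
  have hp' : p ∈ Ideal.span {polyRep q, X (Fin.last n) - 1} := by
    rw [← h.1]
    exact hp
  have hle : Ideal.span {polyRep q, X (Fin.last n) - 1} ≤
      RingHom.ker (aeval y : MvPolynomial (Fin (n + 1)) k →ₐ[k] Ω) := by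
    rw [Ideal.span_le]
    rintro z (rfl | hz)
    · exact hy
    · rw [Set.mem_singleton_iff] at hz
      subst hz
      simp [RingHom.mem_ker, hy1]
  exact hle hp'

theorem algInd {k K : Type*} [Field k] [Field K] [Algebra k K] {n : ℕ}
    {q : QuadraticForm k (Fin (n + 1) → k)} (hq : ∀ x y, q (x + y) = q x + q y)
    {ξ : Fin (n + 1) → K}
    (h : IsQuadricFunctionField k q ξ) (i0 : Fin (n + 1)) (hi0 : i0 ≠ Fin.last n)
    (ha : q (Pi.single i0 1) ≠ 0) :
    AlgebraicIndependent k (fun i : {i : Fin (n + 1) // i ≠ i0 ∧ i ≠ Fin.last n} => ξ i) := by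
  classical
  let τ := {i : Fin (n + 1) // i ≠ i0 ∧ i ≠ Fin.last n}
  let Ω := AlgebraicClosure (FractionRing (MvPolynomial τ k))
  let y0 : Fin (n + 1) → Ω := fun i => if h : i ≠ i0 ∧ i ≠ Fin.last n then
    algebraMap (MvPolynomial τ k) Ω (X ⟨i, h⟩) else 1
  let c : Ω := -(∑ i ∈ Finset.univ.erase i0, algebraMap k Ω (q (Pi.single i 1)) * y0 i ^ 2) /
    algebraMap k Ω (q (Pi.single i0 1))
  obtain ⟨s, hs⟩ := IsAlgClosed.exists_pow_nat_eq c two_pos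
  let y : Fin (n + 1) → Ω := Function.update y0 i0 s
  have ha' : algebraMap k Ω (q (Pi.single i0 1)) ≠ 0 := by simpa using ha
  have hy : extVal Ω q y = 0 := by
    rw [extVal_eq Ω q hq, ← Finset.add_sum_erase _ _ (Finset.mem_univ i0)]
    have : ∑ i ∈ Finset.univ.erase i0, algebraMap k Ω (q (Pi.single i 1)) * y i ^ 2 =
        ∑ i ∈ Finset.univ.erase i0, algebraMap k Ω (q (Pi.single i 1)) * y0 i ^ 2 := by
      refine Finset.sum_congr rfl fun i hi => ?_
      simp [y, Finset.ne_of_mem_erase hi]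
    rw [this]
    simp only [y, Function.update_self, hs, c]
    rw [mul_div_cancel₀ _ ha']
    ring
  have hy1 : y (Fin.last n) = 1 := by
    simp [y, hi0.symm, y0]
  refine (injective_iff_map_eq_zero _).2 fun p hp => ?_
  have hp1 : aeval ξ (rename Subtype.val p) = 0 := by
    rw [aeval_rename]
    exact hp
  have hp2 := ff_ker_le h y hy hy1 _ hp1
  rw [aeval_rename] at hp2
  have hp3 : (y ∘ Subtype.val : τ → Ω) = fun i => algebraMap (MvPolynomial τ k) Ω (X i) := by
    ext i
    simp [y, y0, i.2.1, i.2.2]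
  rw [hp3] at hp2
  have hp4 := MvPolynomial.aeval_algebraMap_apply (R := k) Ω (X : τ → MvPolynomial τ k) p
  have hp5 : algebraMap (MvPolynomial τ k) Ω p = 0 := by
    rw [MvPolynomial.aeval_X_left_apply] at hp4
    rw [← hp4]
    exact hp2
  have hinj : Function.Injective (algebraMap (MvPolynomial τ k) Ω) := by
    rw [IsScalarTower.algebraMap_eq (MvPolynomial τ k) (FractionRing (MvPolynomial τ k)) Ω]
    exact (algebraMap (FractionRing (MvPolynomial τ k)) Ω).injective.comp (IsFractionRing.injective _ _)
  exact hinj (by rw [hp5, map_zero])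

theorem gens_sq {k K ι : Type*} [Field k] [Field K] [Algebra k K] [Fintype ι]
    (a : ι → k) (w : ι → K) (i0 : ι) (ha : a i0 ≠ 0)
    (h0 : ∑ i, algebraMap k K (a i) * w i ^ 2 = 0) (P : ι → Prop)
    (hP : ∀ i, i ≠ i0 → P i ∨ w i = 0 ∨ w i = 1) :
    w i0 ^ 2 ∈ IntermediateField.adjoin k (Set.range fun i : {i : ι // P i} => w i) := by
  classical
  rw [← Finset.add_sum_erase _ _ (Finset.mem_univ i0)] at h0
  have ha' : algebraMap k K (a i0) ≠ 0 := by simpa using ha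
  have h1 : w i0 ^ 2 = (algebraMap k K (a i0))⁻¹ *
      (-∑ i ∈ Finset.univ.erase i0, algebraMap k K (a i) * w i ^ 2) := by
    rw [← eq_neg_of_add_eq_zero_left h0, inv_mul_cancel_left₀ ha']
  rw [h1]
  refine mul_mem (inv_mem (algebraMap_mem _ _)) (neg_mem (sum_mem fun i hi => ?_))
  refine mul_mem (algebraMap_mem _ _) (pow_mem ?_ _)
  rcases hP i (Finset.ne_of_mem_erase hi) with h | h | h
  · exact IntermediateField.subset_adjoin k _ ⟨⟨i, h⟩, rfl⟩
  · rw [h]; exact zero_mem _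
  · rw [h]; exact one_mem _

theorem gens_top {k K ι : Type*} [Field k] [Field K] [Algebra k K]
    (w : ι → K) (i0 : ι) (P : ι → Prop) (htop : IntermediateField.adjoin k (Set.range w) = ⊤)
    (hP : ∀ i, i ≠ i0 → P i ∨ w i = 0 ∨ w i = 1) :
    IntermediateField.adjoin k (insert (w i0) (Set.range fun i : {i : ι // P i} => w i)) = ⊤ := by
  rw [eq_top_iff, ← htop, IntermediateField.adjoin_le_iff]
  rintro _ ⟨i, rfl⟩
  by_cases hi : i = i0
  · subst hi
    exact IntermediateField.subset_adjoin k _ (Set.mem_insert _ _)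
  rcases hP i hi with h | h | h
  · exact IntermediateField.subset_adjoin k _ (Or.inr ⟨⟨i, h⟩, rfl⟩)
  · rw [h]; exact zero_mem _
  · rw [h]; exact one_mem _

open scoped IntermediateField.algebraAdjoinAdjoin in
theorem alg_of_gens {k K τ : Type*} [Field k] [Field K] [Algebra k K] (t : τ → K) (x : K)
    (hx : x ^ 2 ∈ IntermediateField.adjoin k (Set.range t))
    (htop : IntermediateField.adjoin k (insert x (Set.range t)) = ⊤) :
    Algebra.IsAlgebraic (Algebra.adjoin k (Set.range t)) K := by
  have h := (finrank_le_two (F := IntermediateField.adjoin k (Set.range t)) x ⟨x ^ 2, hx⟩ rfl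
    (top_of_insert t x htop)).1
  have h2 : Algebra.IsAlgebraic (IntermediateField.adjoin k (Set.range t)) K :=
    Algebra.IsAlgebraic.of_finite _ _
  exact (IsFractionRing.comap_isAlgebraic_iff (A := Algebra.adjoin k (Set.range t))
    (K := IntermediateField.adjoin k (Set.range t))).2 h2


theorem prop_of_index {k K : Type*} [Field k] [Field K] [Algebra k K] [CharP K 2] {N : ℕ}
    (q : QuadraticForm k (Fin N → k)) (hq : ∀ x y, q (x + y) = q x + q y)
    (hi : totalIndexExt k K q = 1) (u v : Fin N → K) (hv : v ≠ 0)
    (hu0 : extVal K q u = 0) (hv0 : extVal K q v = 0) : ∃ c : K, c • v = u := by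
  by_contra hcon
  push Not at hcon
  have hli : LinearIndependent K ![v, u] := (LinearIndependent.pair_iff' hv).2 hcon
  have h2 : 2 ≤ totalIndexExt k K q := by
    refine le_csSup ⟨N, ?_⟩ ⟨Submodule.span K (Set.range ![v, u]), ?_, ?_⟩
    · rintro d ⟨W, -, rfl⟩
      simpa using Submodule.finrank_le W
    · intro w hw
      rw [Matrix.range_cons, Matrix.range_cons, Matrix.range_empty, Set.union_empty,
        Set.singleton_union, Submodule.mem_span_pair] at hw
      obtain ⟨a, b, rfl⟩ := hw
      rw [extVal_eq K q hq] at *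
      have : ∀ i, algebraMap k K (q (Pi.single i 1)) * (a • v + b • u) i ^ 2 =
          a ^ 2 * (algebraMap k K (q (Pi.single i 1)) * v i ^ 2) +
          b ^ 2 * (algebraMap k K (q (Pi.single i 1)) * u i ^ 2) := by
        intro i
        simp only [Pi.add_apply, Pi.smul_apply, smul_eq_mul]
        rw [CharTwo.add_sq]
        ring
      simp_rw [this]
      rw [Finset.sum_add_distrib, ← Finset.mul_sum, ← Finset.mul_sum, hu0, hv0]
      simp
    · rw [finrank_span_eq_card hli]
      simp
  omega

open scoped Classical in
noncomputable def z0Poly (k : Type*) [Field k] {n : ℕ} (i0 : Fin (n + 1)) :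
    Fin (n + 1) → MvPolynomial {i : Fin (n + 1) // i ≠ i0 ∧ i ≠ Fin.last n} k := fun i =>
  if h : i ≠ i0 ∧ i ≠ Fin.last n then X ⟨i, h⟩ ^ 2 else 1

open scoped Classical in
noncomputable def zPoly {k : Type*} [Field k] {n : ℕ} (a : Fin (n + 1) → k) (i0 : Fin (n + 1)) :
    Fin (n + 1) → MvPolynomial {i : Fin (n + 1) // i ≠ i0 ∧ i ≠ Fin.last n} k :=
  Function.update (z0Poly k i0) i0
    (C (a i0)⁻¹ * (-∑ i ∈ Finset.univ.erase i0, C (a i) * z0Poly k i0 i))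

theorem zPoly_key {k M : Type*} [Field k] [CharP k 2] [ExpChar k 2] [Field M] [Algebra k M]
    {n : ℕ} (a : Fin (n + 1) → k) (i0 : Fin (n + 1)) (ha : a i0 ≠ 0)
    (v : Fin (n + 1) → M) (hv1 : v (Fin.last n) = 1)
    (hv : ∑ i, algebraMap k M (a i) * v i ^ 2 = 0) (p : MvPolynomial (Fin (n + 1)) k) :
    aeval (fun i : {i : Fin (n + 1) // i ≠ i0 ∧ i ≠ Fin.last n} => v i)
      (eval₂Hom ((C : k →+* MvPolynomial {i : Fin (n + 1) // i ≠ i0 ∧ i ≠ Fin.last n} k).comp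
        (frobenius k 2)) (zPoly a i0) p) = (aeval v p) ^ 2 := by
  classical
  let τ := {i : Fin (n + 1) // i ≠ i0 ∧ i ≠ Fin.last n}
  let z0 := z0Poly k i0
  let z := zPoly a i0
  have hcM : CharP M 2 := charP_of_injective_algebraMap (algebraMap k M).injective 2
  have : ExpChar M 2 := ExpChar.prime Nat.prime_two
  have hz0 : ∀ i, i ≠ i0 → aeval (fun i : τ => v i) (z0 i) = v i ^ 2 := by
    intro i hi
    by_cases h : i = Fin.last n
    · subst h
      simp [z0, z0Poly, hv1]
    · simp [z0, z0Poly, hi, h]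
  have hz : ∀ i, aeval (fun i : τ => v i) (z i) = v i ^ 2 := by
    intro i
    by_cases h : i = i0
    · subst h
      simp only [z, zPoly, Function.update_self, map_mul, map_neg, map_sum, algHom_C]
      have hs : ∑ j ∈ Finset.univ.erase i, algebraMap k M (a j) *
          aeval (fun i : τ => v i) (z0 j) =
          ∑ j ∈ Finset.univ.erase i, algebraMap k M (a j) * v j ^ 2 :=
        Finset.sum_congr rfl fun j hj => by rw [hz0 j (Finset.ne_of_mem_erase hj)]
      rw [hs]
      rw [← Finset.add_sum_erase _ _ (Finset.mem_univ i)] at hv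
      have ha' : algebraMap k M (a i) ≠ 0 := by simpa using ha
      rw [← eq_neg_of_add_eq_zero_left hv, map_inv₀, inv_mul_cancel_left₀ ha']
    · simp only [z, zPoly, Function.update_of_ne h]
      exact hz0 i h
  have hhom : ((aeval (fun i : τ => v i) : MvPolynomial τ k →ₐ[k] M) :
        MvPolynomial τ k →+* M).comp
      (eval₂Hom ((C : k →+* MvPolynomial τ k).comp (frobenius k 2)) z) =
      (frobenius M 2).comp ((aeval v : MvPolynomial (Fin (n + 1)) k →ₐ[k] M) :
        MvPolynomial (Fin (n + 1)) k →+* M) := by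
    apply MvPolynomial.ringHom_ext
    · intro c
      simp [frobenius_def]
    · intro i
      simp [frobenius_def, hz]
  exact DFunLike.congr_fun hhom p

theorem ker_transfer {k K L : Type*} [Field k] [CharP k 2] [Field K] [Algebra k K]
    [Field L] [Algebra k L] {n : ℕ} (a : Fin (n + 1) → k) (i0 : Fin (n + 1))
    (ha : a i0 ≠ 0)
    (w : Fin (n + 1) → K) (hw1 : w (Fin.last n) = 1)
    (hw : ∑ i, algebraMap k K (a i) * w i ^ 2 = 0)
    (y : Fin (n + 1) → L) (hy1 : y (Fin.last n) = 1)
    (hy : ∑ i, algebraMap k L (a i) * y i ^ 2 = 0)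
    (hind : AlgebraicIndependent k
      (fun i : {i : Fin (n + 1) // i ≠ i0 ∧ i ≠ Fin.last n} => w i))
    (p : MvPolynomial (Fin (n + 1)) k) (hp : aeval w p = 0) : aeval y p = 0 := by
  have : ExpChar k 2 := ExpChar.prime Nat.prime_two
  have h1 := zPoly_key a i0 ha w hw1 hw p
  rw [hp] at h1
  have hP := (injective_iff_map_eq_zero _).1 hind _ (by rw [h1]; simp)
  have h2 := zPoly_key a i0 ha y hy1 hy p
  rw [hP, map_zero] at h2
  exact pow_eq_zero_iff two_ne_zero |>.1 h2.symm

theorem iso_of_ker {k K L ι : Type*} [Field k] [Field K] [Algebra k K]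
    [Field L] [Algebra k L] (y : ι → K) (w : ι → L)
    [hf : IsFractionRing (Algebra.adjoin k (Set.range y)) K]
    (hw : IntermediateField.adjoin k (Set.range w) = ⊤)
    (h : ∀ p : MvPolynomial ι k, aeval y p = 0 ↔ aeval w p = 0) : Nonempty (K ≃ₐ[k] L) := by
  have hmem : ∀ x : Algebra.adjoin k (Set.range y), ∃ p : MvPolynomial ι k, aeval y p = (x : K) := by
    rintro ⟨x, hx⟩
    rw [Algebra.adjoin_range_eq_range_aeval] at hx
    exact hx
  choose s hs using hmem
  have hwd : ∀ p p' : MvPolynomial ι k, aeval y p = aeval y p' → aeval w p = aeval w p' := by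
    intro p p' hpp
    rw [← sub_eq_zero, ← map_sub]
    apply (h _).1
    rw [map_sub, hpp, sub_self]
  let f : Algebra.adjoin k (Set.range y) →ₐ[k] L :=
    { toFun := fun x => aeval w (s x)
      map_one' := by
        rw [hwd (s 1) 1 (by rw [hs]; simp), map_one]
      map_mul' := fun a b => by
        rw [hwd (s (a * b)) (s a * s b) (by rw [hs, map_mul, hs, hs]; simp), map_mul]
      map_zero' := by
        rw [hwd (s 0) 0 (by rw [hs]; simp), map_zero]
      map_add' := fun a b => by
        rw [hwd (s (a + b)) (s a + s b) (by rw [hs, map_add, hs, hs]; simp), map_add]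
      commutes' := fun c => by
        rw [hwd (s (algebraMap k _ c)) (C c) (by rw [hs, algHom_C]; rfl), algHom_C] }
  have hfinj : Function.Injective f := by
    rw [injective_iff_map_eq_zero]
    intro x hx
    apply Subtype.ext
    rw [← hs x]
    exact (h _).2 hx
  let g : K →ₐ[k] L := IsFractionRing.liftAlgHom hfinj
  refine ⟨AlgEquiv.ofBijective g ⟨g.injective, ?_⟩⟩
  rw [← AlgHom.fieldRange_eq_top, eq_top_iff, ← hw, IntermediateField.adjoin_le_iff]
  rintro _ ⟨i, rfl⟩
  refine ⟨y i, ?_⟩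
  have hy : y i ∈ Algebra.adjoin k (Set.range y) := Algebra.subset_adjoin ⟨i, rfl⟩
  have h1 : g (algebraMap (Algebra.adjoin k (Set.range y)) K ⟨y i, hy⟩) = f ⟨y i, hy⟩ :=
    IsFractionRing.lift_algebraMap hfinj _
  have h2 : f ⟨y i, hy⟩ = w i := by
    change aeval w (s _) = _
    rw [hwd (s ⟨y i, hy⟩) (X i) (by rw [hs, aeval_X]), aeval_X]
  exact h1.trans h2

theorem card_tau {n : ℕ} (j : Fin (n + 1)) (hj : j ≠ Fin.last n) :
    Fintype.card {i : Fin (n + 1) // i ≠ j ∧ i ≠ Fin.last n} = n - 1 := by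
  classical
  rw [Fintype.card_subtype]
  have : Finset.univ.filter (fun i : Fin (n + 1) => i ≠ j ∧ i ≠ Fin.last n) =
      (Finset.univ.erase j).erase (Fin.last n) := by
    ext i
    simp [and_comm]
  rw [this, Finset.card_erase_of_mem (by simp [hj.symm]), Finset.card_erase_of_mem (by simp)]
  simp


theorem aniso_coeff {k : Type*} [Field k] {N : ℕ} (q : QuadraticForm k (Fin N → k))
    (hqa : q.Anisotropic) (i : Fin N) : q (Pi.single i 1) ≠ 0 := by
  intro h
  have := hqa _ h
  simpa using congrFun this i

/-- normalise an isotropic vector -/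
theorem normalise {k K : Type*} [Field k] [Field K] [Algebra k K] {n : ℕ}
    (a : Fin (n + 1) → k) (w : Fin (n + 1) → K) (hw : w ≠ 0)
    (h0 : ∑ i, algebraMap k K (a i) * w i ^ 2 = 0) :
    ∃ (v : Fin (n + 1) → K) (j : Fin (n + 1)), v j = 1 ∧ (j = Fin.last n ∨
      (j ≠ Fin.last n ∧ v (Fin.last n) = 0)) ∧ ∑ i, algebraMap k K (a i) * v i ^ 2 = 0 := by
  have hsc : ∀ j, ∑ i, algebraMap k K (a i) * (w i / w j) ^ 2 = 0 := by
    intro j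
    have : ∀ i, algebraMap k K (a i) * (w i / w j) ^ 2 =
        (algebraMap k K (a i) * w i ^ 2) * ((w j) ^ 2)⁻¹ := by
      intro i
      rw [div_pow, div_eq_mul_inv, mul_assoc]
    simp_rw [this]
    rw [← Finset.sum_mul, h0, zero_mul]
  by_cases hl : w (Fin.last n) = 0
  · obtain ⟨j, hj⟩ := Function.ne_iff.1 hw
    refine ⟨fun i => w i / w j, j, div_self hj, Or.inr ⟨?_, by simp [hl]⟩, hsc j⟩
    rintro rfl
    exact hj hl
  · exact ⟨fun i => w i / w (Fin.last n), Fin.last n, div_self hl, Or.inl rfl, hsc _⟩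

/-- The key step: the coordinates of the image point generate the function field. -/
theorem field_gen (k KY : Type*) [Field k] [CharP k 2]
    [Field KY] [Algebra k KY] (n : ℕ) (hn : 1 ≤ n)
    (q r : QuadraticForm k (Fin (n + 1) → k))
    (hq : ∀ x y, q (x + y) = q x + q y) (hr : ∀ x y, r (x + y) = r x + r y)
    (hqa : q.Anisotropic) (hra : r.Anisotropic)
    (ξY : Fin (n + 1) → KY) (hKY : IsQuadricFunctionField k r ξY)
    (hir : totalIndexExt k KY r = 1)
    (w : Fin (n + 1) → KY) (hw : w ≠ 0)
    (hw0 : ∑ i, algebraMap k KY (q (Pi.single i 1)) * w i ^ 2 = 0) :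
    IntermediateField.adjoin k (Set.range w) = ⊤ := by
  have hcK : CharP KY 2 := charP_of_injective_algebraMap (algebraMap k KY).injective 2
  let Ω := AlgebraicClosure KY
  have hcΩ : CharP Ω 2 := charP_of_injective_algebraMap (algebraMap k Ω).injective 2
  set E := IntermediateField.adjoin k (Set.range w) with hE
  choose α hα using fun i : Fin (n + 1) =>
    IsAlgClosed.exists_pow_nat_eq (algebraMap k Ω (q (Pi.single i 1))) two_pos
  choose β hβ using fun i : Fin (n + 1) =>
    IsAlgClosed.exists_pow_nat_eq (algebraMap k Ω (r (Pi.single i 1))) two_pos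
  have h0l : (0 : Fin (n + 1)) ≠ Fin.last n := by
    intro h
    have := congrArg Fin.val h
    simp at this
    omega
  have hξl := ff_last hKY
  have hξ0 := ff_zero hKY
  have hξ0' := hξ0
  rw [extVal_eq KY r hr] at hξ0'
  have hξne : ξY ≠ 0 := by
    intro h
    rw [h] at hξl
    simp at hξl
  have hP : ∀ i, i ≠ 0 → (i ≠ 0 ∧ i ≠ Fin.last n) ∨ ξY i = 0 ∨ ξY i = 1 := by
    intro i hi
    by_cases h : i = Fin.last n
    · exact Or.inr (Or.inr (by rw [h, hξl]))
    · exact Or.inl ⟨hi, h⟩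
  have hβE : ¬ LinearIndependent E β := by
    refine core _ (algInd hr hKY 0 h0l (aniso_coeff r hra 0)) (ξY 0)
      (gens_sq (fun i => r (Pi.single i 1)) ξY 0 (aniso_coeff r hra 0) hξ0' _ hP)
      (gens_top ξY 0 _ (ff_top hKY) hP) α β (fun i => ⟨_, (hα i).symm⟩)
      (fun i => ⟨_, (hβ i).symm⟩) E ?_ ?_ ?_
    · rw [li_iff (k := k) (fun i => q (Pi.single i 1)) α hα]
      intro v hv
      refine hqa v ?_
      rw [q_eq q hq]
      exact hv
    · rw [li_iff (k := k) (fun i => q (Pi.single i 1)) α hα]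
      intro h
      apply hw
      have := h (fun i => ⟨w i, IntermediateField.subset_adjoin k _ ⟨i, rfl⟩⟩) (by
        apply Subtype.ext
        rw [AddSubmonoidClass.coe_finsetSum]
        exact hw0)
      ext i
      exact congrArg Subtype.val (congrFun this i)
    · rw [li_iff (k := k) (fun i => r (Pi.single i 1)) β hβ]
      intro h
      exact hξne (h ξY hξ0')
  rw [li_iff (k := k) (fun i => r (Pi.single i 1)) β hβ] at hβE
  push Not at hβE
  obtain ⟨y, hy0, hyne⟩ := hβE
  have hy0' : extVal KY r (fun i => (y i : KY)) = 0 := by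
    rw [extVal_eq KY r hr]
    have := congrArg (algebraMap E KY) hy0
    rw [map_sum, map_zero] at this
    rw [← this]
    refine Finset.sum_congr rfl fun i _ => ?_
    rw [map_mul, map_pow]
    rfl
  obtain ⟨c, hc⟩ := prop_of_index r hr hir (fun i => (y i : KY)) ξY hξne hy0' hξ0
  have hc' : ∀ i, c * ξY i = y i := fun i => congrFun hc i
  have hcl : c = y (Fin.last n) := by
    rw [← hc', hξl, mul_one]
  have hcne : c ≠ 0 := by
    rintro rfl
    apply hyne
    ext i
    simp [← hc']
  rw [eq_top_iff, ← ff_top hKY, IntermediateField.adjoin_le_iff]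
  rintro _ ⟨i, rfl⟩
  have : ξY i = c⁻¹ * y i := by
    rw [← hc', inv_mul_cancel_left₀ hcne]
  rw [this, hcl]
  exact mul_mem (inv_mem (y _).2) (y _).2

end QZ

/-- Let `X` and `Y` be anisotropic quasilinear quadrics of the same
dimension over a field `k` of characteristic 2, both with first Witt index 1, such
that `X` is isotropic over `k(Y)` and `Y` is isotropic over `k(X)`.  Then `X` and
`Y` are birational over `k`, i.e. their function fields are isomorphic as
`k`-algebras.  Here `KX = k(X)` and `KY = k(Y)` are the function fields with generic
points `ξX`, `ξY`. -/
theorem quasilinear_zariski_i1_one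
    (k KX KY : Type*) [Field k] [CharP k 2] [Field KX] [Algebra k KX]
    [Field KY] [Algebra k KY] (n : ℕ) (hn : 1 ≤ n)
    (q r : QuadraticForm k (Fin (n + 1) → k))
    (hq : ∀ x y, q (x + y) = q x + q y) (hr : ∀ x y, r (x + y) = r x + r y)
    (hqa : q.Anisotropic) (hra : r.Anisotropic)
    (ξX : Fin (n + 1) → KX) (hKX : IsQuadricFunctionField k q ξX)
    (ξY : Fin (n + 1) → KY) (hKY : IsQuadricFunctionField k r ξY)
    (hiq : totalIndexExt k KX q = 1) (hir : totalIndexExt k KY r = 1)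
    (hXisoY : ∃ w : Fin (n + 1) → KY, w ≠ 0 ∧ extVal KY q w = 0)
    (hYisoX : ∃ w : Fin (n + 1) → KX, w ≠ 0 ∧ extVal KX r w = 0) :
    Nonempty (KX ≃ₐ[k] KY) := by
  classical
  have hcK : CharP KY 2 := charP_of_injective_algebraMap (algebraMap k KY).injective 2
  obtain ⟨w0, hw0, hw00⟩ := hXisoY
  rw [QZ.extVal_eq KY q hq] at hw00
  obtain ⟨w, j, hwj, hj, hw⟩ := QZ.normalise (fun i => q (Pi.single i 1)) w0 hw0 hw00
  have hwne : w ≠ 0 := by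
    rintro rfl
    simp at hwj
  have htop := QZ.field_gen k KY n hn q r hq hr hqa hra ξY hKY hir w hwne hw
  have h0l : (0 : Fin (n + 1)) ≠ Fin.last n := by
    intro h
    have := congrArg Fin.val h
    simp at this
    omega
  -- transcendence degree of `KY`
  have hξl := QZ.ff_last hKY
  have hξ0 := QZ.ff_zero hKY
  rw [QZ.extVal_eq KY r hr] at hξ0
  have hP : ∀ v : Fin (n + 1) → KY, v (Fin.last n) = 1 →
      ∀ i, i ≠ 0 → (i ≠ 0 ∧ i ≠ Fin.last n) ∨ v i = 0 ∨ v i = 1 := by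
    intro v hv i hi
    by_cases h : i = Fin.last n
    · exact Or.inr (Or.inr (by rw [h, hv]))
    · exact Or.inl ⟨hi, h⟩
  have hbas : IsTranscendenceBasis k
      (fun i : {i : Fin (n + 1) // i ≠ 0 ∧ i ≠ Fin.last n} => ξY i) := by
    rw [isTranscendenceBasis_iff_algebraicIndependent_isAlgebraic]
    exact ⟨QZ.algInd hr hKY 0 h0l (QZ.aniso_coeff r hra 0),
      QZ.alg_of_gens _ (ξY 0)
        (QZ.gens_sq (fun i => r (Pi.single i 1)) ξY 0 (QZ.aniso_coeff r hra 0) hξ0 _ (hP _ hξl))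
        (QZ.gens_top ξY 0 _ (QZ.ff_top hKY) (hP _ hξl))⟩
  have htr := hbas.lift_cardinalMk_eq_trdeg
  rcases hj with rfl | ⟨hjl, hwl⟩
  · -- main case
    have halg := QZ.alg_of_gens
      (fun i : {i : Fin (n + 1) // i ≠ 0 ∧ i ≠ Fin.last n} => w i) (w 0)
      (QZ.gens_sq (fun i => q (Pi.single i 1)) w 0 (QZ.aniso_coeff q hqa 0) hw _ (hP _ hwj))
      (QZ.gens_top w 0 _ htop (hP _ hwj))
    have hind := (Algebra.IsAlgebraic.isTranscendenceBasis_of_lift_le_trdeg_of_finite k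
      (fun i : {i : Fin (n + 1) // i ≠ 0 ∧ i ≠ Fin.last n} => w i) htr.le).1
    have hf := hKX.2
    refine QZ.iso_of_ker ξX w htop fun p => ⟨fun hp => ?_, fun hp => ?_⟩
    · exact QZ.ff_ker_le hKX w (by rw [QZ.extVal_eq KY q hq]; exact hw) hwj p hp
    · have hX0 := QZ.ff_zero hKX
      rw [QZ.extVal_eq KX q hq] at hX0
      exact QZ.ker_transfer (fun i => q (Pi.single i 1)) 0 (QZ.aniso_coeff q hqa 0) w hwj hw
        ξX (QZ.ff_last hKX) hX0 hind p hp
  · -- the image cannot lie in the hyperplane at infinity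
    exfalso
    have hP' : ∀ i, i ≠ Fin.last n → (i ≠ j ∧ i ≠ Fin.last n) ∨ w i = 0 ∨ w i = 1 := by
      intro i hi
      by_cases h : i = j
      · exact Or.inr (Or.inr (by rw [h, hwj]))
      · exact Or.inl ⟨h, hi⟩
    have halg := QZ.alg_of_gens
      (fun i : {i : Fin (n + 1) // i ≠ j ∧ i ≠ Fin.last n} => w i) (w (Fin.last n))
      (by rw [hwl]; exact pow_mem (zero_mem _) _)
      (QZ.gens_top w (Fin.last n) _ htop hP')
    have hcard : Cardinal.mk {i : Fin (n + 1) // i ≠ j ∧ i ≠ Fin.last n} =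
        Cardinal.mk {i : Fin (n + 1) // i ≠ 0 ∧ i ≠ Fin.last n} := by
      rw [Cardinal.mk_fintype, Cardinal.mk_fintype, QZ.card_tau j hjl, QZ.card_tau 0 h0l]
    have hind := (Algebra.IsAlgebraic.isTranscendenceBasis_of_lift_le_trdeg_of_finite k
      (fun i : {i : Fin (n + 1) // i ≠ j ∧ i ≠ Fin.last n} => w i) (by rw [hcard]; exact htr.le)).1
    let Q : MvPolynomial {i : Fin (n + 1) // i ≠ j ∧ i ≠ Fin.last n} k :=
      C (q (Pi.single j 1)) + ∑ i, C (q (Pi.single i.1 1)) * X i ^ 2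
    have hQ : aeval (fun i : {i : Fin (n + 1) // i ≠ j ∧ i ≠ Fin.last n} => w i) Q = 0 := by
      simp only [Q, map_add, map_sum, map_mul, map_pow, aeval_X, algHom_C]
      rw [← hw, ← Finset.add_sum_erase _ _ (Finset.mem_univ j), hwj, one_pow, mul_one]
      congr 1
      rw [← Finset.sum_erase (s := Finset.univ.erase j) (a := Fin.last n) (by rw [hwl]; simp)]
      symm
      apply Finset.sum_subtype
      intro i
      simp [and_comm]
    have hQ0 : Q = 0 := (injective_iff_map_eq_zero _).1 hind Q hQ
    have := congrArg constantCoeff hQ0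
    simp [Q] at this
    exact QZ.aniso_coeff q hqa j this
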